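/- arXiv:2504.15682 — 4 statements merged into one kernel-verified Lean document; each statement's English description precedes it below -/
import Mathlib

section
/- Let ω be a weight on [0,1), i.e. a non-negative, measurable, integrable function, and set ω̂(r)=∫_r^1 ω(t)dt. Then ω belongs to the class 𝒟̌ (that is, there exist constants C,K>1 such that ω̂(r) ≥ C·ω̂(1−(1−r)/K) for all 0≤r<1) if and only if there exist constants C'>0 and α>0 such that ω̂(t) ≤ C'·((1−t)/(1−r))^α · ω̂(r) for all 0 ≤ r ≤ t < 1. -/
/-! Forward direction: iterating the defining inequality of `DCheck` gives
`C ^ n * ω̂(1 - (1 - r) / K ^ n) ≤ ω̂(r)` (`wh_iterate`). For `r ≤ t < 1`, taking the largest `n` with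
`K ^ n ≤ (1 - r) / (1 - t)` and using that `ω̂` is decreasing gives the power bound with
exponent `α = log C / log K` and constant `C' = C`.

Converse: apply the power bound at `t = 1 - (1 - r) / K`, with `K` so large that
`2 * C' ≤ K ^ α`; this yields `DCheck` with `C = 2`. -/

open MeasureTheory Metric Filter

noncomputable section

/-- A weight on `[0,1)`: a non-negative, measurable, integrable function. -/
def IsWeight (ω : ℝ → ℝ) : Prop :=
  (∀ r ∈ Set.Ico (0:ℝ) 1, 0 ≤ ω r) ∧ Measurable ω ∧ IntegrableOn ω (Set.Ico 0 1)

/-- `ω̂(r) = ∫_r^1 ω(t) dt`. -/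
def wh (ω : ℝ → ℝ) (r : ℝ) : ℝ := ∫ t in Set.Ioo r 1, ω t

/-- The class `Dhat` of upper doubling weights. -/
def DHat (ω : ℝ → ℝ) : Prop :=
  ∃ C : ℝ, 1 ≤ C ∧ ∀ r ∈ Set.Ico (0:ℝ) 1, wh ω r ≤ C * wh ω ((1 + r) / 2)

/-- The class `Dcheck`: there exist `C, K > 1` with `ω̂(r) ≥ C·ω̂(1-(1-r)/K)`. -/
def DCheck (ω : ℝ → ℝ) : Prop :=
  ∃ C K : ℝ, 1 < C ∧ 1 < K ∧ ∀ r ∈ Set.Ico (0:ℝ) 1,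
    C * wh ω (1 - (1 - r) / K) ≤ wh ω r

/-- `D = Dhat ∩ Dcheck`. -/
def DD (ω : ℝ → ℝ) : Prop := DHat ω ∧ DCheck ω

lemma wh_nonneg {ω : ℝ → ℝ} (hω : IsWeight ω) {r : ℝ} (hr : 0 ≤ r) : 0 ≤ wh ω r :=
  setIntegral_nonneg measurableSet_Ioo fun t ht => hω.1 t ⟨hr.trans ht.1.le, ht.2⟩

lemma wh_anti {ω : ℝ → ℝ} (hω : IsWeight ω) {r t : ℝ} (hr : 0 ≤ r) (hrt : r ≤ t) :
    wh ω t ≤ wh ω r := by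
  refine setIntegral_mono_set (hω.2.2.mono_set fun x hx => ⟨hr.trans hx.1.le, hx.2⟩) ?_
    (Set.Ioo_subset_Ioo_left hrt).eventuallyLE
  filter_upwards [ae_restrict_mem measurableSet_Ioo] with x hx
  exact hω.1 x ⟨hr.trans hx.1.le, hx.2⟩

lemma wh_iterate {ω : ℝ → ℝ} {C K : ℝ} (hC : 1 < C) (hK : 1 < K)
    (h : ∀ r ∈ Set.Ico (0:ℝ) 1, C * wh ω (1 - (1 - r) / K) ≤ wh ω r)
    {r : ℝ} (hr0 : 0 ≤ r) (hr1 : r < 1) (n : ℕ) :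
    C ^ n * wh ω (1 - (1 - r) / K ^ n) ≤ wh ω r := by
  induction n with
  | zero => simp
  | succ n ih =>
    have hKn : 1 ≤ K ^ n := one_le_pow₀ hK.le
    have h1 : (1 - r) / K ^ n ≤ 1 - r := div_le_self (by linarith) hKn
    have h2 : 0 < (1 - r) / K ^ n := div_pos (by linarith) (by linarith)
    have h3 := h (1 - (1 - r) / K ^ n) ⟨by linarith, by linarith⟩
    have e : 1 - (1 - (1 - (1 - r) / K ^ n)) / K = 1 - (1 - r) / K ^ (n + 1) := by
      rw [sub_sub_cancel, div_div, pow_succ]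
    rw [e] at h3
    refine le_trans ?_ ih
    rw [pow_succ, mul_assoc]
    exact mul_le_mul_of_nonneg_left h3 (by positivity)

theorem stmt_0 (ω : ℝ → ℝ) (hω : IsWeight ω) :
    DCheck ω ↔ ∃ C' α : ℝ, 0 < C' ∧ 0 < α ∧
      ∀ r t : ℝ, 0 ≤ r → r ≤ t → t < 1 →
        wh ω t ≤ C' * ((1 - t) / (1 - r)) ^ α * wh ω r := by
  constructor
  · rintro ⟨C, K, hC, hK, h⟩
    have hC0 : 0 < C := by linarith
    have hα : 0 < Real.log C / Real.log K := div_pos (Real.log_pos hC) (Real.log_pos hK)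
    refine ⟨C, _, hC0, hα, fun r t hr hrt ht => ?_⟩
    have ht' : 0 < 1 - t := by linarith
    have hr' : 0 < 1 - r := by linarith
    obtain ⟨n, hn1, hn2⟩ := exists_nat_pow_near ((one_le_div ht').2 (by linarith :
      1 - t ≤ 1 - r)) hK
    have hKn : 0 < K ^ n := by positivity
    have hle : 1 - (1 - r) / K ^ n ≤ t := by
      have : 1 - t ≤ (1 - r) / K ^ n := by
        rw [le_div_iff₀ hKn]
        rw [le_div_iff₀ ht'] at hn1
        linarith
      linarith
    have h0 : 0 ≤ 1 - (1 - r) / K ^ n := by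
      have := div_le_self hr'.le (one_le_pow₀ hK.le : 1 ≤ K ^ n)
      linarith
    have hmono := wh_anti hω h0 hle
    have hit := wh_iterate hC hK h hr (by linarith) n
    -- `K ^ α = C`, so the upper bound `(1 - r) / (1 - t) < K ^ (n + 1)` becomes one by `C ^ (n + 1)`.
    have hKα : K ^ (Real.log C / Real.log K) = C := by
      rw [Real.rpow_def_of_pos (by linarith), mul_div_cancel₀ _ (Real.log_pos hK).ne',
        Real.exp_log hC0]
    have hpow : ((1 - r) / (1 - t)) ^ (Real.log C / Real.log K) ≤ C ^ (n + 1) := by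
      calc _ ≤ (K ^ (n + 1)) ^ (Real.log C / Real.log K) :=
            Real.rpow_le_rpow (by positivity) hn2.le hα.le
        _ = C ^ (n + 1) := by rw [← Real.rpow_pow_comm (by linarith), hKα]
    have hx : ((1 - t) / (1 - r)) ^ (Real.log C / Real.log K) =
        (((1 - r) / (1 - t)) ^ (Real.log C / Real.log K))⁻¹ := by
      rw [← Real.inv_rpow (by positivity), inv_div]
    rw [hx, mul_right_comm, ← div_eq_mul_inv, le_div_iff₀ (by positivity)]
    have hw := wh_nonneg hω (hr.trans hrt)
    calc wh ω t * _ ≤ wh ω t * C ^ (n + 1) := mul_le_mul_of_nonneg_left hpow hw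
      _ = C * (C ^ n * wh ω t) := by ring
      _ ≤ C * (C ^ n * wh ω (1 - (1 - r) / K ^ n)) := by gcongr
      _ ≤ C * wh ω r := by gcongr
  · rintro ⟨C', α, hC', hα, h⟩
    refine ⟨2, max 2 ((2 * C') ^ α⁻¹), by norm_num, lt_max_of_lt_left (by norm_num), ?_⟩
    rintro r ⟨hr0, hr1⟩
    set K := max 2 ((2 * C') ^ α⁻¹) with hKdef
    have hK : 2 ≤ K := le_max_left _ _
    have hK0 : 0 < K := by linarith
    have hKα : 2 * C' ≤ K ^ α := by
      calc 2 * C' = ((2 * C') ^ α⁻¹) ^ α := (Real.rpow_inv_rpow (by positivity) hα.ne').symm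
        _ ≤ K ^ α := Real.rpow_le_rpow (by positivity) (le_max_right _ _) hα.le
    have hr' : 0 < 1 - r := by linarith
    have h1 := div_le_self hr'.le (by linarith : 1 ≤ K)
    have h2 : 0 < (1 - r) / K := by positivity
    have h3 := h r (1 - (1 - r) / K) hr0 (by linarith) (by linarith)
    have e : (1 - (1 - (1 - r) / K)) / (1 - r) = K⁻¹ := by
      rw [sub_sub_cancel]; field_simp
    rw [e, Real.inv_rpow hK0.le] at h3
    have hw := wh_nonneg hω hr0
    have h4 : 2 * (C' * (K ^ α)⁻¹) ≤ 1 := by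
      rw [← mul_assoc, ← div_eq_mul_inv]
      exact (div_le_one (by positivity)).2 hKα
    calc 2 * wh ω (1 - (1 - r) / K) ≤ 2 * (C' * (K ^ α)⁻¹ * wh ω r) := by gcongr
      _ = 2 * (C' * (K ^ α)⁻¹) * wh ω r := by ring
      _ ≤ 1 * wh ω r := by gcongr
      _ = wh ω r := one_mul _
end
end

section
/- Let ω be a weight on [0,1) with ω∈𝒟, and suppose C₀>0 and α>0 are constants such that ω̂(t) ≤ C₀·((1−t)/(1−r))^α · ω̂(r) for all 0 ≤ r ≤ t < 1. Then for every κ>−α there exists a constant C≥1, depending only on ω, κ, such that C⁻¹·(1−r)^κ·ω̂(r) ≤ ∫_r^1 (1−t)^κ ω(t)dt ≤ C·(1−r)^κ·ω̂(r) for all r∈[0,1). -/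
/-!
Since `t ↦ (1 - t) ^ κ` is monotone, one of the two bounds is immediate with constant `1`: the
upper one if `0 ≤ κ`, the lower one if `κ ≤ 0`.

*Lower bound, `0 ≤ κ`.* With `C, K` from the condition `DCheck` and `s = 1 - (1 - r) / K`, the
interval `(r, s]` carries at least the fraction `1 - 1 / C` of the mass `ω̂(r)`, and there
`(1 - t) ^ κ ≥ ((1 - r) / K) ^ κ` (`lower_of_nonneg`).

*Upper bound, `-α < κ < 0`.* Split `(r, 1)` at the points `rₙ = 1 - (1 - r) / 2 ^ n`. On
`[rₙ, rₙ₊₁)` the factor `(1 - t) ^ κ` is at most `(1 - r) ^ κ * 2 ^ (-κ (n + 1))`, while the mass is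
at most `ω̂(rₙ) ≤ C₀ * 2 ^ (-α n) * ω̂(r)`. The resulting series is geometric with ratio
`2 ^ (-(κ + α)) < 1` (`upper_of_neg`).
-/

open MeasureTheory Metric Filter

noncomputable section

lemma lintegral_Ioo_eq_wh {ω : ℝ → ℝ} (hω : IsWeight ω) {r : ℝ} (hr : 0 ≤ r) :
    ∫⁻ t in Set.Ioo r 1, ENNReal.ofReal (ω t) = ENNReal.ofReal (wh ω r) := by
  have hsub : Set.Ioo r 1 ⊆ Set.Ico (0:ℝ) 1 := fun t ht => ⟨hr.trans ht.1.le, ht.2⟩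
  refine (ofReal_integral_eq_lintegral_ofReal (hω.2.2.mono_set hsub) ?_).symm
  filter_upwards [ae_restrict_mem measurableSet_Ioo] with t ht using hω.1 t (hsub ht)

lemma lintegral_Ico_eq_wh {ω : ℝ → ℝ} (hω : IsWeight ω) {r : ℝ} (hr : 0 ≤ r) :
    ∫⁻ t in Set.Ico r 1, ENNReal.ofReal (ω t) = ENNReal.ofReal (wh ω r) := by
  rw [← lintegral_Ioo_eq_wh hω hr]
  exact (setLIntegral_congr Ioo_ae_eq_Ico).symm

lemma mass_Ioc_ge {ω : ℝ → ℝ} (hω : IsWeight ω) {r s : ℝ} (hr : 0 ≤ r) (hrs : r ≤ s) (hs : s < 1) :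
    ENNReal.ofReal (wh ω r - wh ω s) ≤ ∫⁻ t in Set.Ioc r s, ENNReal.ofReal (ω t) := by
  rw [ENNReal.ofReal_sub _ (wh_nonneg hω (hr.trans hrs)), tsub_le_iff_right,
    ← lintegral_Ioo_eq_wh hω hr, ← lintegral_Ioo_eq_wh hω (hr.trans hrs),
    ← Set.Ioc_union_Ioo_eq_Ioo hrs hs]
  exact lintegral_union_le _ _ _

/-- A pointwise lower bound `c ≤ (1 - t) ^ κ` on `S` gives a lower bound for the integral. -/
lemma const_mul_le_lintegral {ω : ℝ → ℝ} (hω : IsWeight ω) {S : Set ℝ} (hS : MeasurableSet S)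
    (hsub : S ⊆ Set.Ico 0 1) {c κ : ℝ} (hc : 0 ≤ c) (h : ∀ t ∈ S, c ≤ (1 - t) ^ κ) :
    ENNReal.ofReal c * ∫⁻ t in S, ENNReal.ofReal (ω t) ≤
      ∫⁻ t in S, ENNReal.ofReal ((1 - t) ^ κ * ω t) := by
  rw [← lintegral_const_mul' _ _ ENNReal.ofReal_ne_top]
  refine setLIntegral_mono' hS fun t ht => ?_
  rw [← ENNReal.ofReal_mul hc]
  exact ENNReal.ofReal_le_ofReal (mul_le_mul_of_nonneg_right (h t ht) (hω.1 t (hsub ht)))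

/-- A pointwise upper bound `(1 - t) ^ κ ≤ c` on `S` gives an upper bound for the integral. -/
lemma lintegral_le_const_mul {ω : ℝ → ℝ} (hω : IsWeight ω) {S : Set ℝ} (hS : MeasurableSet S)
    (hsub : S ⊆ Set.Ico 0 1) {c κ : ℝ} (hc : 0 ≤ c) (h : ∀ t ∈ S, (1 - t) ^ κ ≤ c) :
    ∫⁻ t in S, ENNReal.ofReal ((1 - t) ^ κ * ω t) ≤
      ENNReal.ofReal c * ∫⁻ t in S, ENNReal.ofReal (ω t) := by
  rw [← lintegral_const_mul' _ _ ENNReal.ofReal_ne_top]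
  refine setLIntegral_mono' hS fun t ht => ?_
  rw [← ENNReal.ofReal_mul hc]
  exact ENNReal.ofReal_le_ofReal (mul_le_mul_of_nonneg_right (h t ht) (hω.1 t (hsub ht)))

lemma lower_of_nonpos {ω : ℝ → ℝ} (hω : IsWeight ω) {κ : ℝ} (hκ : κ ≤ 0) {r : ℝ}
    (hr : r ∈ Set.Ico (0:ℝ) 1) :
    ENNReal.ofReal ((1 - r) ^ κ * wh ω r) ≤
      ∫⁻ t in Set.Ioo r 1, ENNReal.ofReal ((1 - t) ^ κ * ω t) := by
  have h1 : 0 ≤ (1 - r) ^ κ := Real.rpow_nonneg (by linarith [hr.2]) _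
  rw [ENNReal.ofReal_mul h1, ← lintegral_Ioo_eq_wh hω hr.1]
  refine const_mul_le_lintegral hω measurableSet_Ioo
    (fun t ht => ⟨hr.1.trans ht.1.le, ht.2⟩) h1 fun t ht => ?_
  exact Real.rpow_le_rpow_of_nonpos (by linarith [ht.2]) (by linarith [ht.1]) hκ

lemma upper_of_nonneg {ω : ℝ → ℝ} (hω : IsWeight ω) {κ : ℝ} (hκ : 0 ≤ κ) {r : ℝ}
    (hr : r ∈ Set.Ico (0:ℝ) 1) :
    ∫⁻ t in Set.Ioo r 1, ENNReal.ofReal ((1 - t) ^ κ * ω t) ≤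
      ENNReal.ofReal ((1 - r) ^ κ * wh ω r) := by
  have h1 : 0 ≤ (1 - r) ^ κ := Real.rpow_nonneg (by linarith [hr.2]) _
  rw [ENNReal.ofReal_mul h1, ← lintegral_Ioo_eq_wh hω hr.1]
  refine lintegral_le_const_mul hω measurableSet_Ioo
    (fun t ht => ⟨hr.1.trans ht.1.le, ht.2⟩) h1 fun t ht => ?_
  exact Real.rpow_le_rpow (by linarith [ht.2]) (by linarith [ht.1]) hκ

lemma lower_of_nonneg {ω : ℝ → ℝ} (hω : IsWeight ω) (hD : DCheck ω) {κ : ℝ} (hκ : 0 ≤ κ) :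
    ∃ c : ℝ, 0 < c ∧ ∀ r ∈ Set.Ico (0:ℝ) 1,
      ENNReal.ofReal (c * (1 - r) ^ κ * wh ω r) ≤
        ∫⁻ t in Set.Ioo r 1, ENNReal.ofReal ((1 - t) ^ κ * ω t) := by
  obtain ⟨C, K, hC, hK, h⟩ := hD
  have hC' : C⁻¹ < 1 := inv_lt_one_of_one_lt₀ hC
  have hKκ : 0 < K ^ κ := Real.rpow_pos_of_pos (by linarith) _
  refine ⟨(1 - C⁻¹) / K ^ κ, div_pos (by linarith) hKκ, fun r hr => ?_⟩
  have hr1 : 0 < 1 - r := by linarith [hr.2]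
  have hd : 0 < (1 - r) / K := div_pos hr1 (by linarith)
  have hd' : (1 - r) / K ≤ 1 - r := div_le_self hr1.le hK.le
  set s := 1 - (1 - r) / K with hs
  have hs1 : s < 1 := by linarith
  have hrs : r ≤ s := by linarith
  have hc : 0 ≤ ((1 - r) / K) ^ κ := Real.rpow_nonneg hd.le _
  have hmass : (1 - C⁻¹) * wh ω r ≤ wh ω r - wh ω s := by
    have h2 : wh ω s ≤ C⁻¹ * wh ω r := by
      rw [inv_mul_eq_div, le_div_iff₀ (by linarith), mul_comm]
      exact h r hr
    linarith
  calc ENNReal.ofReal ((1 - C⁻¹) / K ^ κ * (1 - r) ^ κ * wh ω r)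
      = ENNReal.ofReal (((1 - r) / K) ^ κ * ((1 - C⁻¹) * wh ω r)) := by
        rw [Real.div_rpow hr1.le (by linarith)]
        congr 1
        ring
    _ ≤ ENNReal.ofReal (((1 - r) / K) ^ κ * (wh ω r - wh ω s)) :=
        ENNReal.ofReal_le_ofReal (mul_le_mul_of_nonneg_left hmass hc)
    _ ≤ ENNReal.ofReal (((1 - r) / K) ^ κ) * ∫⁻ t in Set.Ioc r s, ENNReal.ofReal (ω t) := by
        rw [ENNReal.ofReal_mul hc]
        gcongr
        exact mass_Ioc_ge hω hr.1 hrs hs1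
    _ ≤ ∫⁻ t in Set.Ioc r s, ENNReal.ofReal ((1 - t) ^ κ * ω t) := by
        refine const_mul_le_lintegral hω measurableSet_Ioc
          (fun t ht => ⟨hr.1.trans ht.1.le, ht.2.trans_lt hs1⟩) hc fun t ht => ?_
        exact Real.rpow_le_rpow hd.le (by linarith [ht.2]) hκ
    _ ≤ ∫⁻ t in Set.Ioo r 1, ENNReal.ofReal ((1 - t) ^ κ * ω t) :=
        lintegral_mono_set fun t ht => ⟨ht.1, ht.2.trans_lt hs1⟩

lemma upper_of_neg {ω : ℝ → ℝ} (hω : IsWeight ω) {C₀ α : ℝ} (hC₀ : 0 < C₀)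
    (hub : ∀ r t : ℝ, 0 ≤ r → r ≤ t → t < 1 →
      wh ω t ≤ C₀ * ((1 - t) / (1 - r)) ^ α * wh ω r)
    {κ : ℝ} (hκ : -α < κ) (hκ0 : κ < 0) :
    ∃ C : ℝ, ∀ r ∈ Set.Ico (0:ℝ) 1,
      ∫⁻ t in Set.Ioo r 1, ENNReal.ofReal ((1 - t) ^ κ * ω t) ≤
        ENNReal.ofReal (C * (1 - r) ^ κ * wh ω r) := by
  set p : ℝ := (1 / 2 : ℝ) ^ κ with hp
  set a : ℝ := (1 / 2 : ℝ) ^ α with ha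
  have hp0 : 0 < p := Real.rpow_pos_of_pos (by norm_num) _
  have ha0 : 0 < a := Real.rpow_pos_of_pos (by norm_num) _
  have hq1 : p * a < 1 := by
    rw [hp, ha, ← Real.rpow_add (by norm_num)]
    exact Real.rpow_lt_one (by norm_num) (by norm_num) (by linarith)
  have hq0 : 0 ≤ p * a := by positivity
  refine ⟨p * C₀ * (1 - p * a)⁻¹, fun r hr => ?_⟩
  have hr1 : 0 < 1 - r := by linarith [hr.2]
  have hw := wh_nonneg hω hr.1
  have hrκ : 0 ≤ (1 - r) ^ κ := Real.rpow_nonneg hr1.le _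
  -- The dyadic points `ρ n = 1 - (1 - r) / 2 ^ n`.
  let ρ : ℕ → ℝ := fun n => 1 - (1 - r) * (1 / 2) ^ n
  have hρlt (n : ℕ) : ρ n < 1 := by
    have : 0 < (1 - r) * (1 / 2 : ℝ) ^ n := by positivity
    simp only [ρ]; linarith
  have hρge (n : ℕ) : r ≤ ρ n := by
    have h1 : (1 / 2 : ℝ) ^ n ≤ 1 := pow_le_one₀ (by norm_num) (by norm_num)
    have := mul_le_mul_of_nonneg_left h1 hr1.le
    simp only [ρ]; linarith
  have hcover : Set.Ioo r 1 ⊆ ⋃ n, Set.Ico (ρ n) (ρ (n + 1)) := by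
    intro t ht
    obtain ⟨n, hn1, hn2⟩ := exists_nat_pow_near_of_lt_one
      (x := (1 - t) / (1 - r)) (y := (1 / 2 : ℝ)) (div_pos (by linarith [ht.2]) hr1)
      ((div_le_one hr1).2 (by linarith [ht.1])) (by norm_num) (by norm_num)
    rw [lt_div_iff₀ hr1] at hn1
    rw [div_le_iff₀ hr1] at hn2
    refine Set.mem_iUnion.2 ⟨n, ?_, ?_⟩
    · simp only [ρ]; linarith
    · simp only [ρ]; linarith
  have hpiece (n : ℕ) :
      ∫⁻ t in Set.Ico (ρ n) (ρ (n + 1)), ENNReal.ofReal ((1 - t) ^ κ * ω t) ≤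
        ENNReal.ofReal (p * C₀ * (1 - r) ^ κ * wh ω r * (p * a) ^ n) := by
    have hρ0 : 0 ≤ ρ n := hr.1.trans (hρge n)
    have hc : 0 ≤ (1 - r) ^ κ * p ^ (n + 1) := by positivity
    have hmass : wh ω (ρ n) ≤ C₀ * a ^ n * wh ω r := by
      have h := hub r (ρ n) hr.1 (hρge n) (hρlt n)
      have he : (1 - ρ n) / (1 - r) = (1 / 2 : ℝ) ^ n := by
        simp only [ρ]; field_simp; ring
      rwa [he, ← Real.rpow_pow_comm (by norm_num)] at h
    calc ∫⁻ t in Set.Ico (ρ n) (ρ (n + 1)), ENNReal.ofReal ((1 - t) ^ κ * ω t)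
        ≤ ENNReal.ofReal ((1 - r) ^ κ * p ^ (n + 1)) *
            ∫⁻ t in Set.Ico (ρ n) (ρ (n + 1)), ENNReal.ofReal (ω t) := by
          refine lintegral_le_const_mul hω measurableSet_Ico
            (fun t ht => ⟨hρ0.trans ht.1, ht.2.trans (hρlt _)⟩) hc fun t ht => ?_
          rw [hp, Real.rpow_pow_comm (by norm_num), ← Real.mul_rpow hr1.le (by positivity)]
          have h2 := ht.2
          simp only [ρ] at h2
          exact Real.rpow_le_rpow_of_nonpos (by positivity) (by linarith) hκ0.le
      _ ≤ ENNReal.ofReal ((1 - r) ^ κ * p ^ (n + 1)) *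
            ∫⁻ t in Set.Ico (ρ n) 1, ENNReal.ofReal (ω t) := by
          gcongr
          exact (hρlt _).le
      _ = ENNReal.ofReal ((1 - r) ^ κ * p ^ (n + 1) * wh ω (ρ n)) := by
          rw [lintegral_Ico_eq_wh hω hρ0, ENNReal.ofReal_mul hc]
      _ ≤ ENNReal.ofReal ((1 - r) ^ κ * p ^ (n + 1) * (C₀ * a ^ n * wh ω r)) :=
          ENNReal.ofReal_le_ofReal (mul_le_mul_of_nonneg_left hmass hc)
      _ = ENNReal.ofReal (p * C₀ * (1 - r) ^ κ * wh ω r * (p * a) ^ n) := by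
          congr 1
          rw [mul_pow]
          ring
  calc ∫⁻ t in Set.Ioo r 1, ENNReal.ofReal ((1 - t) ^ κ * ω t)
      ≤ ∫⁻ t in ⋃ n, Set.Ico (ρ n) (ρ (n + 1)), ENNReal.ofReal ((1 - t) ^ κ * ω t) :=
        lintegral_mono_set hcover
    _ ≤ ∑' n, ∫⁻ t in Set.Ico (ρ n) (ρ (n + 1)), ENNReal.ofReal ((1 - t) ^ κ * ω t) :=
        lintegral_iUnion_le _ _
    _ ≤ ∑' n : ℕ, ENNReal.ofReal (p * C₀ * (1 - r) ^ κ * wh ω r * (p * a) ^ n) :=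
        ENNReal.tsum_le_tsum hpiece
    _ = ENNReal.ofReal (p * C₀ * (1 - p * a)⁻¹ * (1 - r) ^ κ * wh ω r) := by
        rw [← ENNReal.ofReal_tsum_of_nonneg (fun n => by positivity)
          ((summable_geometric_of_lt_one hq0 hq1).mul_left _), tsum_mul_left,
          tsum_geometric_of_lt_one hq0 hq1]
        congr 1
        ring

theorem stmt_1 (ω : ℝ → ℝ) (hω : IsWeight ω) (hD : DD ω)
    (C₀ α : ℝ) (hC₀ : 0 < C₀) (hα : 0 < α)
    (hub : ∀ r t : ℝ, 0 ≤ r → r ≤ t → t < 1 →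
      wh ω t ≤ C₀ * ((1 - t) / (1 - r)) ^ α * wh ω r)
    (κ : ℝ) (hκ : -α < κ) :
    ∃ C : ℝ, 1 ≤ C ∧ ∀ r ∈ Set.Ico (0:ℝ) 1,
      ENNReal.ofReal (C⁻¹ * (1 - r) ^ κ * wh ω r)
          ≤ (∫⁻ t in Set.Ioo r 1, ENNReal.ofReal ((1 - t) ^ κ * ω t)) ∧
        (∫⁻ t in Set.Ioo r 1, ENNReal.ofReal ((1 - t) ^ κ * ω t))
          ≤ ENNReal.ofReal (C * (1 - r) ^ κ * wh ω r) := by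
  have hnn : ∀ r ∈ Set.Ico (0:ℝ) 1, 0 ≤ (1 - r) ^ κ * wh ω r := fun r hr =>
    mul_nonneg (Real.rpow_nonneg (by linarith [hr.2]) _) (wh_nonneg hω hr.1)
  rcases le_or_gt 0 κ with h0 | h0
  · obtain ⟨c, hc, hlow⟩ := lower_of_nonneg hω hD.2 h0
    refine ⟨max 1 c⁻¹, le_max_left _ _, fun r hr => ⟨le_trans ?_ (hlow r hr),
      (upper_of_nonneg hω h0 hr).trans ?_⟩⟩
    · refine ENNReal.ofReal_le_ofReal ?_
      rw [mul_assoc, mul_assoc]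
      exact mul_le_mul_of_nonneg_right
        (inv_le_of_inv_le₀ hc (le_max_right _ _)) (hnn r hr)
    · refine ENNReal.ofReal_le_ofReal ?_
      rw [mul_assoc]
      exact le_mul_of_one_le_left (hnn r hr) (le_max_left _ _)
  · obtain ⟨C, hup⟩ := upper_of_neg hω hC₀ hub hκ h0
    refine ⟨max 1 C, le_max_left _ _, fun r hr =>
      ⟨le_trans ?_ (lower_of_nonpos hω h0.le hr), (hup r hr).trans ?_⟩⟩
    · refine ENNReal.ofReal_le_ofReal ?_
      rw [mul_assoc]
      exact mul_le_of_le_one_left (hnn r hr) (inv_le_one_of_one_le₀ (le_max_left _ _))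
    · refine ENNReal.ofReal_le_ofReal ?_
      rw [mul_assoc, mul_assoc]
      exact mul_le_mul_of_nonneg_right (le_max_right _ _) (hnn r hr)
end
end

section
/- Let ω be a weight on [0,1) with ω∈𝒟, and suppose C₀>0 and α>0 are constants such that ω̂(t) ≤ C₀·((1−t)/(1−r))^α · ω̂(r) for all 0 ≤ r ≤ t < 1. Then for every κ>−α there exists a constant C≥1, depending only on ω, κ, such that C⁻¹·(1−r)^κ·ω̂(r) ≤ ∫_r^1 (1−t)^{κ−1} ω̂(t)dt ≤ C·(1−r)^κ·ω̂(r) for all r∈[0,1). -/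
/-!
Write `a = 1 - r`. The upper bound inserts the growth hypothesis into the integrand: it is at most
`C₀ a^(-α) ω̂(r) (1-t)^(κ+α-1)`, and since `κ + α > 0` the integral of `(1-t)^(κ+α-1)` over `(r,1)`
converges to `a^(κ+α) / (κ+α)` (`lintegral_one_sub_rpow`).

For the lower bound only the left half `(r, (1+r)/2)` of the interval is kept. There `1 - t` lies
between `a/2` and `a`, so `(1-t)^(κ-1) ≥ 2^(-|κ-1|) a^(κ-1)` (`half_rpow_abs_mul_le`), while
monotonicity of `ω̂` and the upper doubling condition give `ω̂(t) ≥ ω̂((1+r)/2) ≥ ω̂(r) / C₁`.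
-/

open MeasureTheory Metric Filter

noncomputable section

lemma lintegral_one_sub_rpow {p r : ℝ} (hp : 0 < p) (hr : r < 1) :
    ∫⁻ t in Set.Ioo r 1, ENNReal.ofReal ((1 - t) ^ (p - 1))
      = ENNReal.ofReal ((1 - r) ^ p / p) := by
  have hint : IntervalIntegrable (fun t : ℝ => (1 - t) ^ (p - 1)) volume r 1 := by
    have h := (intervalIntegral.intervalIntegrable_rpow' (a := 1 - r) (b := 0)
      (show -1 < p - 1 by linarith)).comp_sub_left 1
    simpa using h
  rw [← ofReal_integral_eq_lintegral_ofReal]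
  · congr 1
    rw [← integral_Ioc_eq_integral_Ioo, ← intervalIntegral.integral_of_le hr.le,
      intervalIntegral.integral_comp_sub_left (fun x : ℝ => x ^ (p - 1)),
      integral_rpow (Or.inl (by linarith))]
    simp [Real.zero_rpow hp.ne']
  · exact ((intervalIntegrable_iff_integrableOn_Ioc_of_le hr.le).1 hint).mono_set
      Set.Ioo_subset_Ioc_self
  · exact (ae_restrict_iff' measurableSet_Ioo).2
      (Eventually.of_forall fun x hx => Real.rpow_nonneg (by linarith [hx.2]) _)

/-- On `[a/2, a]` the power `x ↦ x ^ q`, of either sign of `q`, is comparable to `a ^ q` from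
below. -/
lemma half_rpow_abs_mul_le {a x : ℝ} (q : ℝ) (ha : 0 < a) (h1 : a / 2 ≤ x) (h2 : x ≤ a) :
    (1 / 2 : ℝ) ^ |q| * a ^ q ≤ x ^ q := by
  have hx : 0 < x := by linarith
  have hs : 1 / 2 ≤ x / a := by rw [le_div_iff₀ ha]; linarith
  calc (1 / 2 : ℝ) ^ |q| * a ^ q ≤ (x / a) ^ |q| * a ^ q := by gcongr
    _ ≤ (x / a) ^ q * a ^ q := by
        gcongr ?_ * _
        exact Real.rpow_le_rpow_of_exponent_ge (by positivity) ((div_le_one ha).2 h2)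
          (le_abs_self q)
    _ = x ^ q := by
        rw [← Real.mul_rpow (by positivity) ha.le, div_mul_cancel₀ _ ha.ne']

lemma upper_bound {ω : ℝ → ℝ} {C₀ α κ r : ℝ} (hC₀ : 0 < C₀)
    (hub : ∀ r t : ℝ, 0 ≤ r → r ≤ t → t < 1 →
      wh ω t ≤ C₀ * ((1 - t) / (1 - r)) ^ α * wh ω r)
    (hκ : -α < κ) (hr0 : 0 ≤ r) (hr1 : r < 1) (hw : 0 ≤ wh ω r) :
    (∫⁻ t in Set.Ioo r 1, ENNReal.ofReal ((1 - t) ^ (κ - 1) * wh ω t))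
      ≤ ENNReal.ofReal (C₀ / (κ + α) * (1 - r) ^ κ * wh ω r) := by
  have ha : 0 < 1 - r := by linarith
  have hp : 0 < κ + α := by linarith
  have hM : 0 ≤ C₀ * wh ω r / (1 - r) ^ α := by positivity
  calc (∫⁻ t in Set.Ioo r 1, ENNReal.ofReal ((1 - t) ^ (κ - 1) * wh ω t))
      ≤ ∫⁻ t in Set.Ioo r 1, ENNReal.ofReal (C₀ * wh ω r / (1 - r) ^ α)
          * ENNReal.ofReal ((1 - t) ^ (κ + α - 1)) := by
        refine setLIntegral_mono' measurableSet_Ioo fun t ht => ?_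
        have ht1 : 0 < 1 - t := by linarith [ht.2]
        rw [← ENNReal.ofReal_mul hM]
        apply ENNReal.ofReal_le_ofReal
        calc (1 - t) ^ (κ - 1) * wh ω t
            ≤ (1 - t) ^ (κ - 1) * (C₀ * ((1 - t) / (1 - r)) ^ α * wh ω r) := by
              gcongr
              exact hub r t hr0 ht.1.le ht.2
          _ = _ := by
              rw [Real.div_rpow ht1.le ha.le, show κ + α - 1 = (κ - 1) + α by ring,
                Real.rpow_add ht1]
              ring
    _ = ENNReal.ofReal (C₀ / (κ + α) * (1 - r) ^ κ * wh ω r) := by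
        rw [lintegral_const_mul' _ _ ENNReal.ofReal_ne_top, lintegral_one_sub_rpow hp hr1,
          ← ENNReal.ofReal_mul hM, Real.rpow_add ha]
        congr 1
        have : (1 - r) ^ α ≠ 0 := (Real.rpow_pos_of_pos ha α).ne'
        field_simp

lemma lower_bound {ω : ℝ → ℝ} (hω : IsWeight ω) {C₁ κ r : ℝ} (hC₁ : 1 ≤ C₁)
    (hd : wh ω r ≤ C₁ * wh ω ((1 + r) / 2)) (hr0 : 0 ≤ r) (hr1 : r < 1) :
    ENNReal.ofReal ((1 / 2 : ℝ) ^ |κ - 1| / (2 * C₁) * (1 - r) ^ κ * wh ω r)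
      ≤ ∫⁻ t in Set.Ioo r 1, ENNReal.ofReal ((1 - t) ^ (κ - 1) * wh ω t) := by
  have ha : 0 < 1 - r := by linarith
  have hw := wh_nonneg hω hr0
  have hm : wh ω r / C₁ ≤ wh ω ((1 + r) / 2) := by
    rw [div_le_iff₀ (by linarith)]; linarith
  calc ENNReal.ofReal ((1 / 2 : ℝ) ^ |κ - 1| / (2 * C₁) * (1 - r) ^ κ * wh ω r)
      = ∫⁻ t in Set.Ioo r ((1 + r) / 2),
          ENNReal.ofReal ((1 / 2 : ℝ) ^ |κ - 1| * (1 - r) ^ (κ - 1) * (wh ω r / C₁)) := by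
        rw [setLIntegral_const, Real.volume_Ioo, ← ENNReal.ofReal_mul (by positivity),
          Real.rpow_sub_one ha.ne']
        congr 1
        field_simp
        ring
    _ ≤ ∫⁻ t in Set.Ioo r ((1 + r) / 2), ENNReal.ofReal ((1 - t) ^ (κ - 1) * wh ω t) := by
        refine setLIntegral_mono' measurableSet_Ioo fun t ht => ?_
        have ht2 := ht.2
        have ht1 : 0 < 1 - t := by linarith
        apply ENNReal.ofReal_le_ofReal
        gcongr ?_ * ?_
        · exact half_rpow_abs_mul_le _ ha (by linarith) (by linarith [ht.1])
        · exact hm.trans (wh_anti hω (hr0.trans ht.1.le) ht2.le)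
    _ ≤ _ := lintegral_mono_set (Set.Ioo_subset_Ioo_right (by linarith))

theorem stmt_2 (ω : ℝ → ℝ) (hω : IsWeight ω) (hD : DD ω)
    (C₀ α : ℝ) (hC₀ : 0 < C₀) (hα : 0 < α)
    (hub : ∀ r t : ℝ, 0 ≤ r → r ≤ t → t < 1 →
      wh ω t ≤ C₀ * ((1 - t) / (1 - r)) ^ α * wh ω r)
    (κ : ℝ) (hκ : -α < κ) :
    ∃ C : ℝ, 1 ≤ C ∧ ∀ r ∈ Set.Ico (0:ℝ) 1,
      ENNReal.ofReal (C⁻¹ * (1 - r) ^ κ * wh ω r)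
          ≤ (∫⁻ t in Set.Ioo r 1, ENNReal.ofReal ((1 - t) ^ (κ - 1) * wh ω t)) ∧
        (∫⁻ t in Set.Ioo r 1, ENNReal.ofReal ((1 - t) ^ (κ - 1) * wh ω t))
          ≤ ENNReal.ofReal (C * (1 - r) ^ κ * wh ω r) := by
  obtain ⟨⟨C₁, hC₁, hd⟩, -⟩ := hD
  have hp : 0 < κ + α := by linarith
  have hA : 0 < C₀ / (κ + α) := by positivity
  have hB : 0 < (1 / 2 : ℝ) ^ |κ - 1| / (2 * C₁) := by positivity
  set A := C₀ / (κ + α) with hAdef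
  set B := (1 / 2 : ℝ) ^ |κ - 1| / (2 * C₁) with hBdef
  have hBi : 0 < B⁻¹ := inv_pos.2 hB
  refine ⟨1 + A + B⁻¹, by linarith, fun r ⟨hr0, hr1⟩ => ?_⟩
  have hw := wh_nonneg hω hr0
  have ha : 0 < 1 - r := by linarith
  constructor
  · refine le_trans (ENNReal.ofReal_le_ofReal ?_)
      (lower_bound hω hC₁ (hd r ⟨hr0, hr1⟩) hr0 hr1)
    have : (1 + A + B⁻¹)⁻¹ ≤ B := inv_le_of_inv_le₀ hB (by linarith)
    gcongr
  · refine (upper_bound hC₀ hub hκ hr0 hr1 hw).trans (ENNReal.ofReal_le_ofReal ?_)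
    have : A ≤ 1 + A + B⁻¹ := by linarith
    gcongr
end
end

section
/- Let 0<q<∞ and let ω be a weight on [0,1) with ω∈𝒟̌ and ω̂(r)>0 for all r∈[0,1). Then there exists a constant C>0 such that ∫_0^r dt/(ω̂(t)^{1/q}(1−t)) ≤ C·ω̂(r)^{−1/q} for all r∈[0,1). -/
/-!
Put `s = 1/q` and `g = ω̂ ^ (-s)`, so that the integrand is `g(t)/(1-t)`, a non-decreasing function.
For `r` with `K(1-r) < 1` let `a = 1 - K(1-r)`, so that `r = 1 - (1-a)/K`. By monotonicity the
integral over `[a,r]` is at most `(r-a) g(r)/(1-r) = (K-1) g(r)` (`integral_step`), while the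
condition defining `𝒟̌` gives `g(a) ≤ C^(-s) g(r)`. Hence a bound `M g(a)` for the integral over
`[0,a]` yields the bound `(M C^(-s) + K - 1) g(r)` for the integral over `[0,r]`, and this equals
`M g(r)` for `M = (K-1)/(1-C^(-s))`. Since `1-a = K(1-r)`, induction on `n` with `1 ≤ K^n (1-r)`
reaches every `r`.
-/

open MeasureTheory Metric Filter

noncomputable section

lemma wh_antitone {ω : ℝ → ℝ} (hω : IsWeight ω) {x y : ℝ} (hx : 0 ≤ x) (hxy : x ≤ y) :
    wh ω y ≤ wh ω x := by
  obtain ⟨h0, -, hint⟩ := hω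
  refine setIntegral_mono_set ?_ ?_ (Set.Ioo_subset_Ioo_left hxy).eventuallyLE
  · exact hint.mono_set fun t ht => ⟨hx.trans ht.1.le, ht.2⟩
  · filter_upwards [ae_restrict_mem measurableSet_Ioo] with t ht
    exact h0 t ⟨hx.trans ht.1.le, ht.2⟩

/-- The integrand `t ↦ 1 / (ω̂(t)^s (1 - t))` is non-decreasing on `[0,1)`; this supplies both its
local integrability and the bound by its value at the right endpoint. -/
lemma integrand_monotoneOn {ω : ℝ → ℝ} (hω : IsWeight ω)
    (hpos : ∀ r ∈ Set.Ico (0:ℝ) 1, 0 < wh ω r) {s : ℝ} (hs : 0 ≤ s) :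
    MonotoneOn (fun t => 1 / ((wh ω t) ^ s * (1 - t))) (Set.Ico 0 1) := by
  intro x hx y hy hxy
  have hy' := hpos y hy
  have h1 : 0 < 1 - y := sub_pos.2 hy.2
  have h2 := Real.rpow_le_rpow hy'.le (wh_antitone hω hx.1 hxy) hs
  have h3 := Real.rpow_pos_of_pos hy' s
  exact one_div_le_one_div_of_le (by positivity)
    (mul_le_mul h2 (by linarith) h1.le (h3.le.trans h2))

/-- One step of the argument: if `1 - a ≤ K (1 - r)`, the integral over `[a, r]` is at most the
length `r - a ≤ (K - 1)(1 - r)` times the value of the monotone integrand at `r`. -/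
lemma integral_step {ω : ℝ → ℝ} (hω : IsWeight ω)
    (hpos : ∀ r ∈ Set.Ico (0:ℝ) 1, 0 < wh ω r) {s K a r : ℝ} (hs : 0 ≤ s)
    (ha : 0 ≤ a) (har : a ≤ r) (hr : r < 1) (hK : 1 - a ≤ K * (1 - r)) :
    ∫ t in a..r, 1 / ((wh ω t) ^ s * (1 - t)) ≤ (K - 1) * (wh ω r) ^ (-s) := by
  have hrm : r ∈ Set.Ico (0:ℝ) 1 := ⟨ha.trans har, hr⟩
  have hwr := hpos r hrm
  have h1 : 0 < 1 - r := sub_pos.2 hr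
  have h3 := Real.rpow_pos_of_pos hwr s
  have key : ‖∫ t in a..r, 1 / ((wh ω t) ^ s * (1 - t))‖
      ≤ 1 / ((wh ω r) ^ s * (1 - r)) * |r - a| := by
    refine intervalIntegral.norm_integral_le_of_norm_le_const fun t ht => ?_
    rw [Set.uIoc_of_le har] at ht
    have htm : t ∈ Set.Ico (0:ℝ) 1 := ⟨ha.trans ht.1.le, ht.2.trans_lt hr⟩
    have h4 := Real.rpow_pos_of_pos (hpos t htm) s
    have h5 : 0 < 1 - t := sub_pos.2 htm.2
    rw [Real.norm_of_nonneg (by positivity)]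
    exact integrand_monotoneOn hω hpos hs htm hrm ht.2
  refine (Real.le_norm_self _).trans (key.trans ?_)
  rw [abs_of_nonneg (sub_nonneg.2 har), Real.rpow_neg hwr.le]
  calc 1 / ((wh ω r) ^ s * (1 - r)) * (r - a)
      ≤ 1 / ((wh ω r) ^ s * (1 - r)) * ((K - 1) * (1 - r)) := by
        gcongr
        linarith
    _ = (K - 1) * ((wh ω r) ^ s)⁻¹ := by field_simp

theorem stmt_4 (q : ℝ) (hq : 0 < q) (ω : ℝ → ℝ) (hω : IsWeight ω)
    (hD : DCheck ω) (hpos : ∀ r ∈ Set.Ico (0:ℝ) 1, 0 < wh ω r) :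
    ∃ C : ℝ, 0 < C ∧ ∀ r ∈ Set.Ico (0:ℝ) 1,
      (∫ t in Set.Ioo 0 r, 1 / ((wh ω t) ^ (1/q) * (1 - t)))
        ≤ C * (wh ω r) ^ (-(1/q)) := by
  obtain ⟨C, K, hC, hK, hCK⟩ := hD
  have hs : 0 < 1 / q := by positivity
  generalize 1 / q = s at hs ⊢
  have hK0 : 0 < K := by linarith
  have ha1 : C ^ (-s) < 1 := Real.rpow_lt_one_of_one_lt_of_neg hC (by linarith)
  have hd : 0 < 1 - C ^ (-s) := sub_pos.2 ha1
  -- `M` solves the fixed-point equation `M * C ^ (-s) + (K - 1) = M` of the recursion.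
  set M := (K - 1) / (1 - C ^ (-s)) with hM
  have hMpos : 0 < M := div_pos (by linarith) hd
  have hMeq : M * C ^ (-s) + (K - 1) = M := by
    rw [hM]; field_simp; ring
  have hMK : K - 1 ≤ M := by
    have : 0 < C ^ (-s) := Real.rpow_pos_of_pos (by linarith) _
    nlinarith
  have main : ∀ n : ℕ, ∀ r ∈ Set.Ico (0:ℝ) 1, 1 ≤ K ^ n * (1 - r) →
      ∫ t in (0:ℝ)..r, 1 / ((wh ω t) ^ s * (1 - t)) ≤ M * (wh ω r) ^ (-s) := by
    intro n
    induction n with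
    | zero =>
      intro r hr hn
      have hr0 : r = 0 := le_antisymm (by simpa using hn) hr.1
      subst hr0
      have := Real.rpow_pos_of_pos (hpos 0 hr) (-s)
      rw [intervalIntegral.integral_same]
      positivity
    | succ n ih =>
      intro r hr hn
      have hwr := hpos r hr
      have hg := Real.rpow_pos_of_pos hwr (-s)
      have h1r : 0 < 1 - r := sub_pos.2 hr.2
      by_cases hcase : 1 ≤ K * (1 - r)
      · have := integral_step hω hpos (K := K) hs.le le_rfl hr.1 hr.2 (by linarith)
        exact this.trans (by gcongr)
      · -- `a` is the point whose image under `x ↦ 1 - (1 - x) / K` is `r`.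
        obtain ⟨a, ha⟩ : ∃ a, a = 1 - K * (1 - r) := ⟨_, rfl⟩
        have ha0 : 0 ≤ a := by linarith
        have har : a ≤ r := by nlinarith
        have ham : a ∈ Set.Ico (0:ℝ) 1 := ⟨ha0, har.trans_lt hr.2⟩
        have hmono := integrand_monotoneOn hω hpos hs.le
        have hint : ∀ x y : ℝ, 0 ≤ x → x ≤ y → y < 1 → IntervalIntegrable
            (fun t => 1 / ((wh ω t) ^ s * (1 - t))) volume x y := by
          intro x y hx hxy hy
          apply MonotoneOn.intervalIntegrable
          rw [Set.uIcc_of_le hxy]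
          exact hmono.mono fun t ht => ⟨hx.trans ht.1, ht.2.trans_lt hy⟩
        rw [← intervalIntegral.integral_add_adjacent_intervals
          (hint 0 a le_rfl ha0 ham.2) (hint a r ha0 har hr.2)]
        have hI1 := ih a ham (by rw [ha]; rw [pow_succ] at hn; linarith)
        have hI2 := integral_step hω hpos (K := K) hs.le ha0 har hr.2 (by linarith)
        have hw : C * wh ω r ≤ wh ω a := by
          have h := hCK a ham
          rwa [show 1 - (1 - a) / K = r by rw [ha]; field_simp; ring] at h
        have hga : (wh ω a) ^ (-s) ≤ C ^ (-s) * (wh ω r) ^ (-s) := by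
          rw [← Real.mul_rpow (by linarith) hwr.le]
          exact Real.rpow_le_rpow_of_nonpos (by positivity) hw (by linarith)
        calc _ ≤ M * (C ^ (-s) * (wh ω r) ^ (-s)) + (K - 1) * (wh ω r) ^ (-s) :=
              add_le_add (hI1.trans (by gcongr)) hI2
          _ = (M * C ^ (-s) + (K - 1)) * (wh ω r) ^ (-s) := by ring
          _ = M * (wh ω r) ^ (-s) := by rw [hMeq]
  refine ⟨M, hMpos, fun r hr => ?_⟩
  have h1r : 0 < 1 - r := sub_pos.2 hr.2
  rw [← integral_Ioc_eq_integral_Ioo, ← intervalIntegral.integral_of_le hr.1]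
  obtain ⟨n, hn⟩ := pow_unbounded_of_one_lt (1 / (1 - r)) hK
  exact main n r hr ((div_lt_iff₀ h1r).1 hn).le
end
end
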